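/- Let X and Y be real Banach spaces, k ≥ 1 an integer and P : X → Y a continuous k-homogeneous polynomial. The following are equivalent: (i) for every bounded linear operator T : c₀ → X, if the polynomial P∘T is compact then T is a compact operator; (ii) for every WUC-set A ⊆ X, if P(A) is relatively (norm) compact in Y then A is relatively compact in X; (iii) for every WUC-set A ⊆ X, if P(A) is relatively weakly compact in Y then A is relatively compact in X. -/

import Mathlib

open Filter Topology Metric

noncomputable section

/-- The Banach space `c₀` of real sequences converging to zero, with the sup norm. -/
abbrev c0 : Type := ZeroAtInftyContinuousMap ℕ ℝ

/-- The unit vector basis of `c₀`. -/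
def e (n : ℕ) : c0 :=
  { toFun := fun i => if i = n then (1 : ℝ) else 0
    continuous_toFun := continuous_of_discreteTopology
    zero_at_infty' := by
      rw [Filter.cocompact_eq_cofinite]
      refine tendsto_const_nhds.congr' ?_
      have h : {n}ᶜ ∈ (Filter.cofinite : Filter ℕ) := by simp [Filter.cofinite]
      filter_upwards [h] with i hi
      simp only [Set.mem_compl_iff, Set.mem_singleton_iff] at hi
      simp [hi] }

/-- A series `∑ xₙ` is weakly unconditionally Cauchy (w.u.C.) if `∑ |φ (xₙ)| < ∞` for every
continuous linear functional `φ`. -/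
def WUC {X : Type*} [NormedAddCommGroup X] [NormedSpace ℝ X] (x : ℕ → X) : Prop :=
  ∀ φ : X →L[ℝ] ℝ, Summable fun n => |φ (x n)|

/-- A sequence is equivalent to the unit vector basis of `c₀`: there are `0 < c ≤ C` with
`c · maxᵢ |aᵢ| ≤ ‖∑ aᵢ xᵢ‖ ≤ C · maxᵢ |aᵢ|` for all finite scalar families. -/
def IsEquivC0Basis {X : Type*} [NormedAddCommGroup X] [NormedSpace ℝ X] (x : ℕ → X) : Prop :=
  ∃ c C : ℝ, 0 < c ∧ c ≤ C ∧ ∀ (n : ℕ) (a : ℕ → ℝ),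
    c * (⨆ i : Fin n, |a i|) ≤ ‖∑ i ∈ Finset.range n, a i • x i‖ ∧
    ‖∑ i ∈ Finset.range n, a i • x i‖ ≤ C * (⨆ i : Fin n, |a i|)

/-- A map (polynomial) is unconditionally converging if for every w.u.C. series `∑ xₙ` the
sequence of values at the partial sums converges in norm. -/
def UCPoly {X Y : Type*} [NormedAddCommGroup X] [NormedSpace ℝ X]
    [NormedAddCommGroup Y] [NormedSpace ℝ Y] (P : X → Y) : Prop :=
  ∀ x : ℕ → X, WUC x →
    ∃ L : Y, Tendsto (fun n => P (∑ i ∈ Finset.range n, x i)) atTop (𝓝 L)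

/-- An operator is unconditionally converging if it maps w.u.C. series to unconditionally
convergent series. -/
def UCOp {X Y : Type*} [NormedAddCommGroup X] [NormedSpace ℝ X]
    [NormedAddCommGroup Y] [NormedSpace ℝ Y] (T : X → Y) : Prop :=
  ∀ x : ℕ → X, WUC x → Summable fun n => T (x n)

/-- A map (polynomial or operator) is compact if the image of the closed unit ball is
relatively norm compact. -/
def CompactMap {X Y : Type*} [NormedAddCommGroup X] [NormedSpace ℝ X]
    [NormedAddCommGroup Y] [NormedSpace ℝ Y] (P : X → Y) : Prop :=
  IsCompact (closure (P '' Metric.closedBall 0 1))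

/-- A set is relatively weakly compact if its closure in the weak topology is compact. -/
def RelWeakCompact {Y : Type*} [NormedAddCommGroup Y] [NormedSpace ℝ Y] (s : Set Y) : Prop :=
  IsCompact (closure ((toWeakSpace ℝ Y) '' s))

/-- A WUC-set is the image of the closed unit ball of `c₀` under a bounded operator. -/
def IsWUCSet {X : Type*} [NormedAddCommGroup X] [NormedSpace ℝ X] (s : Set X) : Prop :=
  ∃ T : c0 →L[ℝ] X, s = ⇑T '' Metric.closedBall 0 1

/-!
Let `f` be a weakly compact polynomial on `c₀`. If its values on bounded sets hardly depend on
far out coordinates, then `f` maps the unit ball to a totally bounded set, which is relatively norm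
compact because it is relatively weakly compact. This independence is proved by induction on the
degree: the differences `Δ_[h] f` have lower degree, so it suffices to consider `f t` for `t` with
`t i = 0` for `i < M`.

For scalar `f` the increments `f t - f 0` over far out `t` nearly add up, so boundedness on balls
makes them small. For general `f`, applying the scalar case to `φ ∘ f` for each functional `φ`
extends `f` to a weakly continuous map on the compact cube `[-r, r] ^ ℕ`. By Baire such a map is
almost constant on some open set, hence almost independent of far out coordinates near some point
`x`, and the induction hypothesis for `Δ_[x] f` transports this to `0`.
-/

open scoped fwdDiff

section WeakTopology

variable {X Y : Type*} [NormedAddCommGroup X] [NormedSpace ℝ X] [NormedAddCommGroup Y]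
  [NormedSpace ℝ Y]

theorem isClosed_toWeakSpace_image_of_convex {s : Set Y} (hconv : Convex ℝ s) (hs : IsClosed s) :
    IsClosed (toWeakSpace ℝ Y '' s) := by
  rw [← hs.closure_eq, hconv.toWeakSpace_closure ℝ]
  exact isClosed_closure

theorem isClosed_toWeakSpace_image_closedBall (y : Y) (r : ℝ) :
    IsClosed (toWeakSpace ℝ Y '' closedBall y r) :=
  isClosed_toWeakSpace_image_of_convex (convex_closedBall y r) isClosed_closedBall

theorem relWeakCompact_of_isCompact_closure {s : Set Y} (hs : IsCompact (closure s)) :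
    RelWeakCompact s :=
  (hs.image (toWeakSpaceCLM ℝ Y).continuous).closure_of_subset (Set.image_mono subset_closure)

theorem continuous_dual_toWeakSpace_symm (φ : Y →L[ℝ] ℝ) :
    Continuous fun w : WeakSpace ℝ Y => φ ((toWeakSpace ℝ Y).symm w) :=
  WeakBilin.eval_continuous _ φ

theorem continuous_toWeakSpace_comp_of_dual {Z : Type*} [TopologicalSpace Z] {g : Z → Y}
    (hg : ∀ φ : Y →L[ℝ] ℝ, Continuous fun z => φ (g z)) :
    Continuous fun z => toWeakSpace ℝ Y (g z) :=
  WeakBilin.continuous_of_continuous_eval _ hg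

namespace RelWeakCompact

theorem image {s : Set X} (hs : RelWeakCompact s) (T : X →L[ℝ] Y) : RelWeakCompact (T '' s) := by
  refine (IsCompact.image hs (WeakSpace.map T).continuous).closure_of_subset ?_
  rintro _ ⟨_, ⟨x, hx, rfl⟩, rfl⟩
  exact ⟨toWeakSpace ℝ X x, subset_closure ⟨x, hx, rfl⟩, rfl⟩

theorem mono {s t : Set Y} (ht : RelWeakCompact t) (hst : s ⊆ t) : RelWeakCompact s :=
  IsCompact.closure_of_subset ht ((Set.image_mono hst).trans subset_closure)

theorem image2_sub {s t : Set Y} (hs : RelWeakCompact s) (ht : RelWeakCompact t) :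
    RelWeakCompact (Set.image2 (· - ·) s t) := by
  refine ((hs.prod ht).image continuous_sub).closure_of_subset ?_
  rintro _ ⟨_, ⟨x, hx, y, hy, rfl⟩, rfl⟩
  exact ⟨(toWeakSpace ℝ Y x, toWeakSpace ℝ Y y),
    ⟨subset_closure ⟨x, hx, rfl⟩, subset_closure ⟨y, hy, rfl⟩⟩, (map_sub _ x y).symm⟩

theorem isBounded_image_dual {s : Set Y} (hs : RelWeakCompact s) (φ : Y →L[ℝ] ℝ) :
    Bornology.IsBounded (φ '' s) := by
  refine (IsCompact.image hs (continuous_dual_toWeakSpace_symm φ)).isBounded.subset ?_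
  rintro _ ⟨y, hy, rfl⟩
  exact ⟨toWeakSpace ℝ Y y, subset_closure ⟨y, hy, rfl⟩, rfl⟩

theorem exists_forall_tendsto_dual {s : Set Y} (hs : RelWeakCompact s) {u : ℕ → Y}
    (hus : ∀ n, u n ∈ s) (hu : ∀ φ : Y →L[ℝ] ℝ, CauchySeq fun n => φ (u n)) :
    ∃ y, ∀ φ : Y →L[ℝ] ℝ, Tendsto (fun n => φ (u n)) atTop (𝓝 (φ y)) := by
  obtain ⟨w, -, hw⟩ := IsCompact.exists_mapClusterPt (f := atTop)
    (u := fun n => toWeakSpace ℝ Y (u n)) hs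
    (tendsto_principal.2 (.of_forall fun n => subset_closure ⟨u n, hus n, rfl⟩))
  refine ⟨(toWeakSpace ℝ Y).symm w, fun φ => le_nhds_of_cauchy_adhp (hu φ) ?_⟩
  exact MapClusterPt.continuousAt_comp (f := fun w => φ ((toWeakSpace ℝ Y).symm w))
    (continuous_dual_toWeakSpace_symm φ).continuousAt hw

-- Closed balls are weakly closed, so a Cauchy filter converges in norm to any weak cluster point.
theorem isCompact_closure_of_totallyBounded {s : Set Y} (hw : RelWeakCompact s)
    (hs : TotallyBounded s) : IsCompact (closure s) := by
  refine isCompact_iff_totallyBounded_isComplete.2 ⟨hs.closure, fun ℱ hℱ hℱs => ?_⟩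
  have : ℱ.NeBot := hℱ.1
  have hℱw : map (toWeakSpace ℝ Y) ℱ ≤ 𝓟 (closure (toWeakSpace ℝ Y '' s)) :=
    tendsto_principal.2 (mem_of_superset (le_principal_iff.1 hℱs) fun y hy =>
      map_mem_closure (toWeakSpaceCLM ℝ Y).continuous hy fun x hx => ⟨x, hx, rfl⟩)
  obtain ⟨w, -, hw⟩ := hw hℱw
  obtain ⟨y, rfl⟩ := (toWeakSpace ℝ Y).surjective w
  have hy : ℱ ≤ 𝓝 y := by
    refine Metric.nhds_basis_closedBall.ge_iff.2 fun ε hε => ?_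
    obtain ⟨t, ht, htε⟩ := (Metric.cauchy_iff.1 hℱ).2 ε hε
    refine mem_of_superset ht fun x hx => ?_
    have hball : toWeakSpace ℝ Y '' closedBall x ε ∈ map (toWeakSpace ℝ Y) ℱ :=
      image_mem_map (mem_of_superset ht fun z hz => (htε z hz x hx).le)
    obtain ⟨z, hz, hzy⟩ := (isClosed_toWeakSpace_image_closedBall x ε).closure_subset
      (mem_closure_iff_clusterPt.2 (hw.mono (le_principal_iff.2 hball)))
    rw [(toWeakSpace ℝ Y).injective hzy] at hz
    exact mem_closedBall_comm.1 hz
  exact ⟨y, isClosed_closure.mem_of_frequently_of_tendsto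
    (Eventually.frequently (le_principal_iff.1 hℱs)) hy, hy⟩

end RelWeakCompact

-- Weak and norm closures of a subspace agree, so the range of a weakly continuous map on a
-- separable space is norm separable.
theorem isSeparable_range_of_continuous_toWeakSpace {Z : Type*} [TopologicalSpace Z]
    [TopologicalSpace.SeparableSpace Z] {g : Z → Y}
    (hg : Continuous fun z => toWeakSpace ℝ Y (g z)) :
    TopologicalSpace.IsSeparable (Set.range g) := by
  obtain ⟨D, hDc, hDd⟩ := TopologicalSpace.exists_countable_dense Z
  let V := Submodule.span ℝ (g '' D)
  refine (hDc.image g).isSeparable.span (R := ℝ) |>.closure.mono ?_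
  rintro _ ⟨z, rfl⟩
  have hz : toWeakSpace ℝ Y (g z) ∈ closure (toWeakSpace ℝ Y '' (V : Set Y)) :=
    map_mem_closure (f := fun z => toWeakSpace ℝ Y (g z)) hg (hDd z) fun d hd =>
      ⟨g d, Submodule.subset_span ⟨d, hd, rfl⟩, rfl⟩
  rwa [← V.convex.toWeakSpace_closure ℝ, (toWeakSpace ℝ Y).injective.mem_set_image] at hz

theorem exists_isOpen_forall_dist_le_of_continuous_toWeakSpace {Z : Type*} [TopologicalSpace Z]
    [BaireSpace Z] [TopologicalSpace.SeparableSpace Z] [Nonempty Z] {g : Z → Y}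
    (hg : Continuous fun z => toWeakSpace ℝ Y (g z)) {ε : ℝ} (hε : 0 < ε) :
    ∃ U : Set Z, IsOpen U ∧ U.Nonempty ∧ ∀ z ∈ U, ∀ w ∈ U, dist (g z) (g w) ≤ ε := by
  obtain ⟨c, hc, hgc⟩ := isSeparable_range_of_continuous_toWeakSpace hg
  have : Countable c := hc.to_subtype
  have hclosed (p : c) : IsClosed (g ⁻¹' closedBall (p : Y) (ε / 2)) := by
    rw [← (toWeakSpace ℝ Y).injective.preimage_image (closedBall (p : Y) (ε / 2)),
      ← Set.preimage_comp]
    exact (isClosed_toWeakSpace_image_closedBall _ _).preimage hg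
  have hcover : ⋃ p : c, g ⁻¹' closedBall (p : Y) (ε / 2) = Set.univ := by
    refine Set.eq_univ_of_forall fun z => ?_
    obtain ⟨p, hp, hzp⟩ := Metric.mem_closure_iff.1 (hgc ⟨z, rfl⟩) (ε / 2) (half_pos hε)
    exact Set.mem_iUnion.2 ⟨⟨p, hp⟩, hzp.le⟩
  obtain ⟨p, hp⟩ := nonempty_interior_of_iUnion_of_closed hclosed hcover
  refine ⟨_, isOpen_interior, hp, fun z hz w hw => ?_⟩
  have hzp : dist (g z) p ≤ ε / 2 := interior_subset (s := g ⁻¹' _) hz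
  have hwp : dist (g w) p ≤ ε / 2 := interior_subset (s := g ⁻¹' _) hw
  linarith [dist_triangle_right (g z) (g w) p]

end WeakTopology

section FiniteDegree

/-- `f` is a polynomial map of degree less than `k` in the sense of Fréchet: all its `k`-fold
differences vanish. Strict inequality lets the recursion start from the zero map. -/
def DegreeLT {E F : Type*} [AddCommGroup E] [AddCommGroup F] : ℕ → (E → F) → Prop
  | 0, f => f = 0
  | k + 1, f => ∀ h, DegreeLT k (Δ_[h] f)

namespace DegreeLT

variable {E F G : Type*} [AddCommGroup E] [AddCommGroup F] [AddCommGroup G]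

theorem zero (k : ℕ) : DegreeLT k (0 : E → F) := by
  induction k with
  | zero => rfl
  | succ k ih => exact fun h => by rwa [show Δ_[h] (0 : E → F) = 0 from fwdDiff_const h 0]

theorem add {k : ℕ} {f g : E → F} (hf : DegreeLT k f) (hg : DegreeLT k g) :
    DegreeLT k (f + g) := by
  induction k generalizing f g with
  | zero => rw [DegreeLT] at *; rw [hf, hg, add_zero]
  | succ k ih => exact fun h => by rw [fwdDiff_add]; exact ih (hf h) (hg h)

theorem sum {ι : Type*} {k : ℕ} {s : Finset ι} {f : ι → E → F}
    (hf : ∀ i ∈ s, DegreeLT k (f i)) : DegreeLT k (∑ i ∈ s, f i) :=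
  Finset.sum_induction f (DegreeLT k) (fun _ _ => add) (zero k) hf

theorem addMonoidHom_comp {k : ℕ} {f : E → F} (hf : DegreeLT k f) (φ : F →+ G) :
    DegreeLT k (φ ∘ f) := by
  induction k generalizing f with
  | zero => funext x; simp [show f = 0 from hf]
  | succ k ih =>
    intro h
    have hΔ : Δ_[h] (φ ∘ f) = φ ∘ Δ_[h] f := funext fun x => (map_sub φ _ _).symm
    exact hΔ ▸ ih (hf h)

end DegreeLT

variable {R E F ι : Type*} [Semiring R] [AddCommGroup E] [Module R E] [AddCommGroup F]
  [Module R F]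

theorem fwdDiff_multilinearMap_piecewise [DecidableEq ι]
    (A : MultilinearMap R (fun _ : ι => E) F) (s : Finset ι) (m : ι → E) (h : E) :
    Δ_[h] (fun x => A (s.piecewise (fun _ => x) m)) =
      ∑ t ∈ s.ssubsets, fun x => A (t.piecewise (fun _ => x) (s.piecewise (fun _ => h) m)) := by
  funext x
  have hadd := A.map_piecewise_add (fun _ => x) (s.piecewise (fun _ => h) m) s
  have hleft : s.piecewise ((fun _ => x) + s.piecewise (fun _ => h) m)
      (s.piecewise (fun _ => h) m) = s.piecewise (fun _ => x + h) m := by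
    ext i
    by_cases hi : i ∈ s <;> simp [hi]
  rw [hleft, ← Finset.add_sum_erase _ _ (Finset.mem_powerset_self s),
    Finset.piecewise_idem_right] at hadd
  rw [fwdDiff, hadd, add_sub_cancel_left, Finset.sum_apply]
  rfl

theorem degreeLT_multilinearMap_piecewise [DecidableEq ι]
    (A : MultilinearMap R (fun _ : ι => E) F) {k : ℕ} {s : Finset ι} (hs : s.card < k) (m : ι → E) :
    DegreeLT k fun x => A (s.piecewise (fun _ => x) m) := by
  induction k generalizing s m with
  | zero => exact absurd hs (Nat.not_lt_zero _)
  | succ k ih =>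
    intro h
    rw [fwdDiff_multilinearMap_piecewise]
    refine DegreeLT.sum fun t ht => ih ?_ _
    have := Finset.card_lt_card (Finset.mem_ssubsets.1 ht)
    omega

theorem degreeLT_multilinearMap_diag [Fintype ι] (A : MultilinearMap R (fun _ : ι => E) F) :
    DegreeLT (Fintype.card ι + 1) fun x => A fun _ => x := by
  classical
  simpa using degreeLT_multilinearMap_piecewise A (s := Finset.univ) (Nat.lt_succ_self _) 0

end FiniteDegree

section CoordinateSpace

theorem c0_norm_le_iff {x : c0} {r : ℝ} (hr : 0 ≤ r) : ‖x‖ ≤ r ↔ ∀ i, |x i| ≤ r := by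
  rw [← ZeroAtInftyContinuousMap.norm_toBCF_eq_norm]
  exact BoundedContinuousFunction.norm_le hr

theorem c0_abs_apply_le_norm (x : c0) (i : ℕ) : |x i| ≤ ‖x‖ :=
  (c0_norm_le_iff (norm_nonneg x)).1 le_rfl i

/-- The elements of the closed ball of `c₀` of radius `r` whose first `M` coordinates vanish. -/
def tailBall (M : ℕ) (r : ℝ) : Set c0 :=
  {t | ‖t‖ ≤ r ∧ ∀ i < M, t i = 0}

theorem tailBall_subset_tailBall {M N : ℕ} (hMN : M ≤ N) (r : ℝ) : tailBall N r ⊆ tailBall M r :=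
  fun _ ht => ⟨ht.1, fun i hi => ht.2 i (hi.trans_le hMN)⟩

theorem add_mem_tailBall {M : ℕ} {r s : ℝ} {t u : c0} (ht : t ∈ tailBall M r)
    (hu : u ∈ tailBall M s) : t + u ∈ tailBall M (r + s) :=
  ⟨norm_add_le_of_le ht.1 hu.1, fun i hi => by simp [ht.2 i hi, hu.2 i hi]⟩

theorem norm_add_le_of_mem_tailBall {x t : c0} {r : ℝ} {N : ℕ} (hx : ‖x‖ ≤ r)
    (hxN : ∀ i ≥ N, x i = 0) (ht : t ∈ tailBall N r) : ‖x + t‖ ≤ r := by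
  refine (c0_norm_le_iff ((norm_nonneg x).trans hx)).2 fun i => ?_
  rcases lt_or_ge i N with hi | hi
  · simpa [ht.2 i hi] using (c0_abs_apply_le_norm x i).trans hx
  · simpa [hxN i hi] using (c0_abs_apply_le_norm t i).trans ht.1

/-- The cube `[-r, r] ^ ℕ` in the space of all real sequences, compact for the product topology.
It contains the coordinate sequences of the closed ball of `c₀` of radius `r`. -/
def cube (r : ℝ) : Set (ℕ → ℝ) :=
  Set.univ.pi fun _ => Set.Icc (-r) r

theorem isCompact_cube (r : ℝ) : IsCompact (cube r) :=
  isCompact_univ_pi fun _ => isCompact_Icc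

theorem mem_cube_iff {a : ℕ → ℝ} {r : ℝ} : a ∈ cube r ↔ ∀ i, |a i| ≤ r := by
  simp only [cube, Set.mem_univ_pi, Set.mem_Icc, abs_le]

theorem coe_mem_cube {x : c0} {r : ℝ} (hx : ‖x‖ ≤ r) : ⇑x ∈ cube r :=
  mem_cube_iff.2 fun i => (c0_abs_apply_le_norm x i).trans hx

/-- The truncation `a ↦ (a₀, …, a_{N-1}, 0, 0, …)` of real sequences, as an operator into `c₀`
that is continuous for the product topology. -/
def trunc (N : ℕ) : (ℕ → ℝ) →L[ℝ] c0 :=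
  ∑ i ∈ Finset.range N, (ContinuousLinearMap.proj i).smulRight (e i)

theorem trunc_apply (N : ℕ) (a : ℕ → ℝ) (i : ℕ) : trunc N a i = if i < N then a i else 0 := by
  have heval (s : Finset ℕ) : (∑ j ∈ s, a j • e j) i = ∑ j ∈ s, (a j • e j) i :=
    map_sum (⟨⟨fun x => x i, rfl⟩, fun _ _ => rfl⟩ : c0 →+ ℝ) _ _
  have he (j : ℕ) : e j i = if i = j then 1 else 0 := rfl
  simp [trunc, heval, he]

theorem norm_trunc_le {a : ℕ → ℝ} {r : ℝ} (ha : a ∈ cube r) (N : ℕ) : ‖trunc N a‖ ≤ r := by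
  have hr : 0 ≤ r := (abs_nonneg _).trans (mem_cube_iff.1 ha 0)
  refine (c0_norm_le_iff hr).2 fun i => ?_
  rw [trunc_apply]
  split_ifs
  · exact mem_cube_iff.1 ha i
  · simpa using hr

theorem trunc_apply_of_ge (a : ℕ → ℝ) {i N : ℕ} (hi : N ≤ i) : trunc N a i = 0 := by
  rw [trunc_apply, if_neg hi.not_gt]

theorem trunc_mem_tailBall {x : c0} {M : ℕ} {r : ℝ} (hx : x ∈ tailBall M r) (N : ℕ) :
    trunc N x ∈ tailBall M r :=
  ⟨norm_trunc_le (coe_mem_cube hx.1) N, fun i hi => by simp [trunc_apply, hx.2 i hi]⟩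

theorem trunc_sub_trunc_mem_tailBall {a : ℕ → ℝ} {r : ℝ} (ha : a ∈ cube r) {M N : ℕ}
    (hMN : M ≤ N) : trunc N a - trunc M a ∈ tailBall M r := by
  have hr : 0 ≤ r := (abs_nonneg _).trans (mem_cube_iff.1 ha 0)
  refine ⟨(c0_norm_le_iff hr).2 fun i => ?_, fun i hi => ?_⟩
  · rw [ZeroAtInftyContinuousMap.sub_apply, trunc_apply, trunc_apply]
    have := mem_cube_iff.1 ha i
    split_ifs <;> first | omega | simpa
  · simp [trunc_apply, hi, hi.trans_le hMN]

theorem sub_trunc_mem_tailBall {x : c0} {r : ℝ} (hx : ‖x‖ ≤ r) (N : ℕ) :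
    x - trunc N x ∈ tailBall N r := by
  refine ⟨(c0_norm_le_iff ((norm_nonneg x).trans hx)).2 fun i => ?_, fun i hi => ?_⟩
  · have := (c0_abs_apply_le_norm x i).trans hx
    rw [ZeroAtInftyContinuousMap.sub_apply, trunc_apply]
    split_ifs
    · simpa using (norm_nonneg x).trans hx
    · simpa
  · simp [trunc_apply, hi]

theorem tendsto_trunc_coe (x : c0) : Tendsto (fun N => trunc N x) atTop (𝓝 x) := by
  have hx : Tendsto x atTop (𝓝 0) := by
    simpa [cocompact_eq_cofinite, Nat.cofinite_eq_atTop] using x.zero_at_infty'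
  refine Metric.tendsto_atTop'.2 fun ε hε => ?_
  obtain ⟨N, hN⟩ := Metric.tendsto_atTop.1 hx (ε / 2) (half_pos hε)
  refine ⟨N, fun n hn => lt_of_le_of_lt ?_ (half_lt_self hε)⟩
  rw [dist_eq_norm, norm_sub_rev, c0_norm_le_iff (half_pos hε).le]
  intro i
  rw [ZeroAtInftyContinuousMap.sub_apply, trunc_apply]
  split_ifs with hi
  · simpa using (half_pos hε).le
  · simpa using (hN i (by omega)).le

end CoordinateSpace

section WeaklyCompactPolynomial

/-- Polynomial maps of degree less than `k`, not necessarily homogeneous, which are uniformly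
continuous on balls and send balls to relatively weakly compact sets. Unlike homogeneous
polynomials, this class is closed under differences, which lower `k`. -/
structure IsWeaklyCompactPoly {E Y : Type*} [NormedAddCommGroup E] [NormedAddCommGroup Y]
    [NormedSpace ℝ Y] (k : ℕ) (f : E → Y) : Prop where
  degreeLT : DegreeLT k f
  uniformContinuousOn_closedBall (r : ℝ) : UniformContinuousOn f (closedBall 0 r)
  relWeakCompact_image_closedBall (r : ℝ) : RelWeakCompact (f '' closedBall 0 r)

namespace IsWeaklyCompactPoly

variable {E Y : Type*} [NormedAddCommGroup E] [NormedAddCommGroup Y] [NormedSpace ℝ Y] {k : ℕ}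
  {f : E → Y}

theorem continuous (hf : IsWeaklyCompactPoly k f) : Continuous f :=
  continuous_iff_continuousAt.2 fun x =>
    (hf.uniformContinuousOn_closedBall (‖x‖ + 1)).continuousOn.continuousAt <|
      mem_of_superset (isOpen_ball.mem_nhds (by simp)) ball_subset_closedBall

theorem fwdDiff (hf : IsWeaklyCompactPoly (k + 1) f) (h : E) :
    IsWeaklyCompactPoly k (Δ_[h] f) := by
  have hshift (r : ℝ) : Set.MapsTo (· + h) (closedBall 0 r) (closedBall 0 (r + ‖h‖)) :=
    fun x hx => by simpa using norm_add_le_of_le (mem_closedBall_zero_iff.1 hx) le_rfl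
  refine ⟨hf.degreeLT h, fun r => ?_, fun r => ?_⟩
  · have hcomp := (hf.uniformContinuousOn_closedBall (r + ‖h‖)).comp
      (uniformContinuous_id.add uniformContinuous_const).uniformContinuousOn (hshift r)
    rw [uniformContinuousOn_iff_restrict] at hcomp ⊢
    exact hcomp.sub (uniformContinuousOn_iff_restrict.1 (hf.uniformContinuousOn_closedBall r))
  · refine ((hf.relWeakCompact_image_closedBall (r + ‖h‖)).image2_sub
      (hf.relWeakCompact_image_closedBall r)).mono ?_
    rintro _ ⟨x, hx, rfl⟩
    exact ⟨f (x + h), ⟨x + h, hshift r hx, rfl⟩, f x, ⟨x, hx, rfl⟩, rfl⟩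

theorem dual_comp (hf : IsWeaklyCompactPoly k f) (φ : Y →L[ℝ] ℝ) :
    IsWeaklyCompactPoly k (φ ∘ f) where
  degreeLT := hf.degreeLT.addMonoidHom_comp (φ : Y →+ ℝ)
  uniformContinuousOn_closedBall r :=
    φ.uniformContinuous.comp_uniformContinuousOn (hf.uniformContinuousOn_closedBall r)
  relWeakCompact_image_closedBall r :=
    Set.image_comp φ f _ ▸ (hf.relWeakCompact_image_closedBall r).image φ

end IsWeaklyCompactPoly

end WeaklyCompactPolynomial

section TailContinuity

variable {Y : Type*} [NormedAddCommGroup Y] {f : c0 → Y}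

/-- On each ball of `c₀`, the values of `f` at elements supported far enough out are close to
`f 0`. This is the local form of `TailContinuous`. -/
def TailContinuousAtZero (f : c0 → Y) : Prop :=
  ∀ r : ℝ, ∀ ε > 0, ∃ M, ∀ t ∈ tailBall M r, ‖f t - f 0‖ ≤ ε

/-- A map on `c₀` is tail continuous if, uniformly on balls, it varies little when only far out
coordinates are changed; on balls it is then a uniform limit of maps of finitely many
coordinates. -/
def TailContinuous (f : c0 → Y) : Prop :=
  ∀ r : ℝ, ∀ ε > 0, ∃ M, ∀ x, ‖x‖ ≤ r → ∀ t ∈ tailBall M r, ‖f (x + t) - f x‖ ≤ ε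

theorem TailContinuous.atZero (hf : TailContinuous f) : TailContinuousAtZero f := by
  intro r ε hε
  obtain ⟨M, hM⟩ := hf r ε hε
  exact ⟨M, fun t ht => by simpa using hM 0 (by simpa using (norm_nonneg t).trans ht.1) t ht⟩

-- A finite net of `S` reduces the claim to finitely many `h`.
theorem exists_forall_norm_fwdDiff_add_sub_le
    (hf : ∀ r, UniformContinuousOn f (closedBall 0 r)) (hΔ : ∀ h, TailContinuous (Δ_[h] f))
    {S : Set c0} (hS : TotallyBounded S) (r : ℝ) {ε : ℝ} (hε : 0 < ε) :
    ∃ M, ∀ h ∈ S, ∀ x, ‖x‖ ≤ r → ∀ t ∈ tailBall M r,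
      ‖Δ_[h] f (x + t) - Δ_[h] f x‖ ≤ ε := by
  obtain ⟨ρ, hρ⟩ := hS.isBounded.subset_closedBall 0
  obtain ⟨δ, hδ, hfδ⟩ :=
    Metric.uniformContinuousOn_iff.1 (hf (r + r + ρ)) (ε / 3) (by positivity)
  obtain ⟨F, hFS, hF, hSF⟩ := Metric.finite_approx_of_totallyBounded hS δ hδ
  choose M hM using fun h => hΔ h r (ε / 3) (by positivity)
  obtain ⟨K, hK⟩ := (hF.image M).bddAbove
  refine ⟨K, fun h hh x hx t ht => ?_⟩
  obtain ⟨h', hh', hdist⟩ := Set.mem_iUnion₂.1 (hSF hh)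
  have hfh (z : c0) (hz : ‖z‖ ≤ r + r) : ‖f (z + h) - f (z + h')‖ ≤ ε / 3 := by
    have hball (w : c0) (hw : w ∈ S) : z + w ∈ closedBall 0 (r + r + ρ) :=
      mem_closedBall_zero_iff.2 (norm_add_le_of_le hz (mem_closedBall_zero_iff.1 (hρ hw)))
    rw [← dist_eq_norm]
    exact (hfδ _ (hball h hh) _ (hball h' (hFS hh')) (by simpa using hdist)).le
  have hxt := hfh (x + t) (norm_add_le_of_le hx ht.1)
  have hx0 := hfh x (by linarith [norm_nonneg x])
  have hnet := hM h' x hx t (tailBall_subset_tailBall (hK ⟨h', hh', rfl⟩) r ht)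
  calc ‖Δ_[h] f (x + t) - Δ_[h] f x‖
      = ‖(f (x + t + h) - f (x + t + h')) - (f (x + h) - f (x + h'))
          + (Δ_[h'] f (x + t) - Δ_[h'] f x)‖ := by
        simp only [fwdDiff]; congr 1; abel
    _ ≤ ε / 3 + ε / 3 + ε / 3 := norm_add_le_of_le (norm_sub_le_of_le hxt hx0) hnet
    _ = ε := by ring

-- Split `x` into a truncation `h`, which ranges over a compact set, and a tail `s`.
theorem TailContinuousAtZero.tailContinuous (hf0 : TailContinuousAtZero f)
    (hf : ∀ r, UniformContinuousOn f (closedBall 0 r)) (hΔ : ∀ h, TailContinuous (Δ_[h] f)) :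
    TailContinuous f := by
  intro r ε hε
  obtain ⟨N, hN⟩ := hf0 (r + r) (ε / 3) (by positivity)
  obtain ⟨M, hM⟩ := exists_forall_norm_fwdDiff_add_sub_le hf hΔ
    ((isCompact_cube r).image (trunc N).continuous).totallyBounded r
    (ε := ε / 3) (by positivity)
  refine ⟨max N M, fun x hx t ht => ?_⟩
  obtain ⟨h, hh, s, hs_tail, rfl⟩ :
      ∃ h ∈ trunc N '' cube r, ∃ s ∈ tailBall N r, s + h = x :=
    ⟨_, ⟨x, coe_mem_cube hx, rfl⟩, _, sub_trunc_mem_tailBall hx N, sub_add_cancel _ _⟩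
  have ht_tail : t ∈ tailBall N r := tailBall_subset_tailBall (le_max_left N M) r ht
  have hsr : ‖s‖ ≤ r + r := by linarith [hs_tail.1, norm_nonneg s]
  have hΔs := hM h hh s hs_tail.1 t (tailBall_subset_tailBall (le_max_right N M) r ht)
  have hst := hN (s + t) (add_mem_tailBall hs_tail ht_tail)
  have hs0 := hN s ⟨hsr, hs_tail.2⟩
  calc ‖f (s + h + t) - f (s + h)‖
      = ‖(Δ_[h] f (s + t) - Δ_[h] f s) + ((f (s + t) - f 0) - (f s - f 0))‖ := by
        simp only [fwdDiff, add_right_comm s h t]; congr 1; abel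
    _ ≤ ε / 3 + (ε / 3 + ε / 3) := norm_add_le_of_le hΔs (norm_sub_le_of_le hst hs0)
    _ = ε := by ring

theorem TailContinuous.totallyBounded_image_closedBall (hf : TailContinuous f)
    (hcont : Continuous f) (r : ℝ) : TotallyBounded (f '' closedBall 0 r) := by
  refine Metric.totallyBounded_iff.2 fun ε hε => ?_
  obtain ⟨M, hM⟩ := hf r (ε / 2) (half_pos hε)
  have hK : TotallyBounded ((fun a => f (trunc M a)) '' cube r) :=
    ((isCompact_cube r).image (hcont.comp (trunc M).continuous)).totallyBounded
  obtain ⟨F, hF, hKF⟩ := Metric.totallyBounded_iff.1 hK (ε / 2) (half_pos hε)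
  refine ⟨F, hF, ?_⟩
  rintro _ ⟨x, hx, rfl⟩
  rw [mem_closedBall_zero_iff] at hx
  obtain ⟨y, hy, hxy⟩ := Set.mem_iUnion₂.1 (hKF ⟨x, coe_mem_cube hx, rfl⟩)
  have hxM : dist (f x) (f (trunc M x)) ≤ ε / 2 := by
    simpa [dist_eq_norm] using
      hM _ (norm_trunc_le (coe_mem_cube hx) M) _ (sub_trunc_mem_tailBall hx M)
  refine Set.mem_iUnion₂.2 ⟨y, hy, mem_ball.2 ?_⟩
  linarith [dist_triangle (f x) (f (trunc M x)) y, mem_ball.1 hxy]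

end TailContinuity

section Scalar

variable {p : c0 → ℝ}

-- Increments of `p` along far-out `u` nearly add up: for `h` finitely supported,
-- `p (h + u) - p 0 = (p h - p 0) + (p u - p 0) + (Δ_[h] p u - Δ_[h] p 0)`.
theorem exists_norm_le_mul_le_sub (hcont : Continuous p)
    (hΔ : ∀ h, TailContinuousAtZero (Δ_[h] p)) {r ε : ℝ} (hε : 0 < ε)
    (hlarge : ∀ M, ∃ t ∈ tailBall M r, ε < p t - p 0) (n : ℕ) :
    ∃ h N, ‖h‖ ≤ r ∧ (∀ i ≥ N, h i = 0) ∧ n * (ε / 2) ≤ p h - p 0 := by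
  induction n with
  | zero =>
    obtain ⟨t, ht, -⟩ := hlarge 0
    exact ⟨0, 0, by simpa using (norm_nonneg t).trans ht.1, fun _ _ => rfl, by simp⟩
  | succ n ih =>
    obtain ⟨h, N, hhr, hhN, hh⟩ := ih
    obtain ⟨M, hM⟩ := hΔ h r (ε / 2) (half_pos hε)
    obtain ⟨t, ht, htε⟩ := hlarge (max M N)
    obtain ⟨K, u, hu_tail, huK, huε⟩ : ∃ K, ∃ u ∈ tailBall (max M N) r,
        (∀ i ≥ K, u i = 0) ∧ ε < p u - p 0 := by
      obtain ⟨K, hK⟩ := (((hcont.tendsto t).comp (tendsto_trunc_coe t)).sub_const (p 0)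
        |>.eventually_const_lt htε).exists
      exact ⟨K, _, trunc_mem_tailBall ht K, fun i => trunc_apply_of_ge t, hK⟩
    refine ⟨h + u, max N K, norm_add_le_of_mem_tailBall hhr hhN
      (tailBall_subset_tailBall (le_max_right M N) r hu_tail), fun i hi => ?_, ?_⟩
    · simp [hhN i (le_of_max_le_left hi), huK i (le_of_max_le_right hi)]
    · have hΔu := (abs_le.1 (hM u (tailBall_subset_tailBall (le_max_left M N) r hu_tail))).1
      simp only [fwdDiff, zero_add, add_comm u h] at hΔu
      push_cast
      linarith

theorem exists_forall_mem_tailBall_sub_le (hcont : Continuous p)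
    (hbdd : ∀ r, Bornology.IsBounded (p '' closedBall 0 r))
    (hΔ : ∀ h, TailContinuousAtZero (Δ_[h] p)) (r : ℝ) {ε : ℝ} (hε : 0 < ε) :
    ∃ M, ∀ t ∈ tailBall M r, p t - p 0 ≤ ε := by
  by_contra! hlarge
  obtain ⟨C, hC⟩ := (hbdd r).bddAbove
  obtain ⟨n, hn⟩ := exists_nat_gt ((C - p 0) / (ε / 2))
  obtain ⟨h, -, hhr, -, hh⟩ := exists_norm_le_mul_le_sub hcont hΔ hε hlarge n
  have hhC : p h ≤ C := hC ⟨h, mem_closedBall_zero_iff.2 hhr, rfl⟩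
  have := (div_lt_iff₀ (half_pos hε)).1 hn
  linarith

theorem tailContinuousAtZero_of_isBounded_image (hcont : Continuous p)
    (hbdd : ∀ r, Bornology.IsBounded (p '' closedBall 0 r))
    (hΔ : ∀ h, TailContinuousAtZero (Δ_[h] p)) : TailContinuousAtZero p := by
  have hbdd_neg (r : ℝ) : Bornology.IsBounded ((-p) '' closedBall 0 r) := by
    simpa [← Set.image_neg_eq_neg, Set.image_image] using (hbdd r).neg
  have hΔ_neg (h : c0) : TailContinuousAtZero (Δ_[h] (-p)) := by
    have : Δ_[h] (-p) = -Δ_[h] p := by simpa using fwdDiff_const_smul h (-1 : ℝ) p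
    simpa [TailContinuousAtZero, this, neg_add_eq_sub, abs_sub_comm] using hΔ h
  intro r ε hε
  obtain ⟨M, hM⟩ := exists_forall_mem_tailBall_sub_le hcont hbdd hΔ r hε
  obtain ⟨N, hN⟩ := exists_forall_mem_tailBall_sub_le hcont.neg hbdd_neg hΔ_neg r hε
  refine ⟨max M N, fun t ht => abs_le.2 ⟨?_, ?_⟩⟩
  · have := hN t (tailBall_subset_tailBall (le_max_right M N) r ht)
    simp only [Pi.neg_apply] at this
    linarith
  · exact hM t (tailBall_subset_tailBall (le_max_left M N) r ht)

theorem TailContinuous.uniformCauchySeqOn_trunc (hp : TailContinuous p) (r : ℝ) :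
    UniformCauchySeqOn (fun n a => p (trunc n a)) atTop (cube r) := by
  refine Metric.uniformCauchySeqOn_iff.2 fun ε hε => ?_
  obtain ⟨M, hM⟩ := hp r (ε / 3) (by positivity)
  have hMn (n : ℕ) (hn : n ≥ M) (a : ℕ → ℝ) (ha : a ∈ cube r) :
      dist (p (trunc n a)) (p (trunc M a)) ≤ ε / 3 := by
    simpa [dist_eq_norm] using hM _ (norm_trunc_le ha M) _ (trunc_sub_trunc_mem_tailBall ha hn)
  refine ⟨M, fun m hm n hn a ha => ?_⟩
  linarith [hMn m hm a ha, hMn n hn a ha,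
    dist_triangle_right (p (trunc m a)) (p (trunc n a)) (p (trunc M a))]

end Scalar

namespace IsWeaklyCompactPoly

variable {Y : Type*} [NormedAddCommGroup Y] [NormedSpace ℝ Y] {k : ℕ} {f : c0 → Y}

theorem tailContinuous_of_forall_fwdDiff
    (hstep : ∀ k (g : c0 → Y), IsWeaklyCompactPoly k g → (∀ h, TailContinuous (Δ_[h] g)) →
      TailContinuousAtZero g)
    (hf : IsWeaklyCompactPoly k f) : TailContinuous f := by
  induction k generalizing f with
  | zero =>
    obtain rfl : f = 0 := hf.degreeLT
    exact fun r ε hε => ⟨0, fun x _ t _ => by simpa using hε.le⟩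
  | succ k ih =>
    have hΔ (h : c0) : TailContinuous (Δ_[h] f) := ih (hf.fwdDiff h)
    exact (hstep _ f hf hΔ).tailContinuous hf.uniformContinuousOn_closedBall hΔ

theorem tailContinuous_scalar {p : c0 → ℝ} (hp : IsWeaklyCompactPoly k p) : TailContinuous p :=
  hp.tailContinuous_of_forall_fwdDiff fun _ _ hg hΔ =>
    tailContinuousAtZero_of_isBounded_image hg.continuous
      (fun r => by
        simpa using (hg.relWeakCompact_image_closedBall r).isBounded_image_dual (.id ℝ ℝ))
      fun h => (hΔ h).atZero

theorem exists_continuousOn_cube (hf : IsWeaklyCompactPoly k f) (r : ℝ) :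
    ∃ g : (ℕ → ℝ) → Y, ContinuousOn (fun a => toWeakSpace ℝ Y (g a)) (cube r) ∧
      ∀ x : c0, ‖x‖ ≤ r → g x = f x := by
  have hcauchy (φ : Y →L[ℝ] ℝ) :
      UniformCauchySeqOn (fun n a => φ (f (trunc n a))) atTop (cube r) :=
    (hf.dual_comp φ).tailContinuous_scalar.uniformCauchySeqOn_trunc r
  have hlim (a : ℕ → ℝ) (ha : a ∈ cube r) :
      ∃ y, ∀ φ : Y →L[ℝ] ℝ, Tendsto (fun n => φ (f (trunc n a))) atTop (𝓝 (φ y)) :=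
    (hf.relWeakCompact_image_closedBall r).exists_forall_tendsto_dual
      (fun n => ⟨_, mem_closedBall_zero_iff.2 (norm_trunc_le ha n), rfl⟩)
      fun φ => (hcauchy φ).cauchySeq ha
  choose! g hg using hlim
  refine ⟨g, ?_, fun x hx => ?_⟩
  · rw [continuousOn_iff_continuous_domRestrict]
    refine continuous_toWeakSpace_comp_of_dual (g := (cube r).domRestrict g) fun φ => ?_
    have hunif := (hcauchy φ).tendstoUniformlyOn_of_tendsto fun a ha => hg a ha φ
    refine continuousOn_iff_continuous_domRestrict.1 (hunif.continuousOn (.of_forall fun n => ?_))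
    exact (φ.continuous.comp (hf.continuous.comp (trunc n).continuous)).continuousOn
  · refine SeparatingDual.eq_iff_forall_dual_eq (R := ℝ) |>.2 fun φ => ?_
    exact tendsto_nhds_unique (hg x (coe_mem_cube hx) φ)
      (((φ.continuous.comp hf.continuous).tendsto x).comp (tendsto_trunc_coe x))

end IsWeaklyCompactPoly

section Vector

theorem exists_forall_eq_imp_mem_of_isOpen {α : ℕ → Type*} [∀ i, TopologicalSpace (α i)]
    {V : Set (∀ i, α i)} (hV : IsOpen V) {a : ∀ i, α i} (ha : a ∈ V) :
    ∃ N, ∀ b : ∀ i, α i, (∀ i < N, b i = a i) → b ∈ V := by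
  obtain ⟨I, u, hu, hIV⟩ := isOpen_pi_iff.1 hV a ha
  obtain ⟨N, hN⟩ := I.exists_nat_subset_range
  exact ⟨N, fun b hb => hIV fun i hi => hb i (Finset.mem_range.1 (hN hi)) ▸ (hu i hi).2⟩

variable {Y : Type*} [NormedAddCommGroup Y] [NormedSpace ℝ Y] {k : ℕ} {f : c0 → Y}

namespace IsWeaklyCompactPoly

theorem exists_forall_mem_tailBall_norm_add_sub_le (hf : IsWeaklyCompactPoly k f) {r ε : ℝ}
    (hr : 0 ≤ r) (hε : 0 < ε) : ∃ x N, ∀ t ∈ tailBall N r, ‖f (x + t) - f x‖ ≤ ε := by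
  obtain ⟨g, hg, hgf⟩ := hf.exists_continuousOn_cube r
  have : CompactSpace (cube r) := isCompact_iff_compactSpace.1 (isCompact_cube r)
  have : Nonempty (cube r) := ⟨0, mem_cube_iff.2 fun i => by simpa using hr⟩
  obtain ⟨_, ⟨V, hV, rfl⟩, ⟨a, haV⟩, hVε⟩ :=
    exists_isOpen_forall_dist_le_of_continuous_toWeakSpace (g := (cube r).domRestrict g)
      (continuousOn_iff_continuous_domRestrict.1 hg) hε
  obtain ⟨N, hN⟩ := exists_forall_eq_imp_mem_of_isOpen hV haV
  have hclose {x y : c0} (hx : ‖x‖ ≤ r) (hy : ‖y‖ ≤ r) (hxa : ∀ i < N, x i = a.1 i)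
      (hya : ∀ i < N, y i = a.1 i) : ‖f x - f y‖ ≤ ε := by
    have := hVε ⟨x, coe_mem_cube hx⟩ (hN x hxa) ⟨y, coe_mem_cube hy⟩ (hN y hya)
    simpa [hgf, hx, hy, dist_eq_norm] using this
  have ha (i : ℕ) (hi : i < N) : trunc N a.1 i = a.1 i := by rw [trunc_apply, if_pos hi]
  have har : ‖trunc N a.1‖ ≤ r := norm_trunc_le a.2 N
  refine ⟨trunc N a.1, N, fun t ht => hclose ?_ har (fun i hi => ?_) ha⟩
  · exact norm_add_le_of_mem_tailBall har (fun i hi => trunc_apply_of_ge a.1 hi) ht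
  · simp [ht.2 i hi, ha i hi]

theorem tailContinuousAtZero (hf : IsWeaklyCompactPoly k f)
    (hΔ : ∀ h, TailContinuousAtZero (Δ_[h] f)) : TailContinuousAtZero f := by
  intro r ε hε
  rcases lt_or_ge r 0 with hr | hr
  · exact ⟨0, fun t ht => absurd ((norm_nonneg t).trans ht.1) hr.not_ge⟩
  obtain ⟨x, N, hN⟩ := hf.exists_forall_mem_tailBall_norm_add_sub_le hr (half_pos hε)
  obtain ⟨M, hM⟩ := hΔ x r (ε / 2) (half_pos hε)
  refine ⟨max N M, fun t ht => ?_⟩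
  have hxt := hN t (tailBall_subset_tailBall (le_max_left N M) r ht)
  have hΔt := hM t (tailBall_subset_tailBall (le_max_right N M) r ht)
  calc ‖f t - f 0‖ = ‖(f (x + t) - f x) - (Δ_[x] f t - Δ_[x] f 0)‖ := by
        simp only [_root_.fwdDiff, zero_add, add_comm t x]; congr 1; abel
    _ ≤ ε / 2 + ε / 2 := norm_sub_le_of_le hxt hΔt
    _ = ε := add_halves ε

theorem tailContinuous (hf : IsWeaklyCompactPoly k f) : TailContinuous f :=
  hf.tailContinuous_of_forall_fwdDiff fun _ _ hg hΔ =>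
    hg.tailContinuousAtZero fun h => (hΔ h).atZero

theorem isCompact_closure_image_closedBall (hf : IsWeaklyCompactPoly k f) (r : ℝ) :
    IsCompact (closure (f '' closedBall 0 r)) :=
  (hf.relWeakCompact_image_closedBall r).isCompact_closure_of_totallyBounded
    (hf.tailContinuous.totallyBounded_image_closedBall hf.continuous r)

end IsWeaklyCompactPoly

end Vector

section Homogeneous

variable {E Y ι : Type*} [NormedAddCommGroup E] [NormedSpace ℝ E] [NormedAddCommGroup Y]
  [NormedSpace ℝ Y]

theorem uniformContinuousOn_multilinearMap_diag [Finite ι]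
    (A : ContinuousMultilinearMap ℝ (fun _ : ι => E) Y) (r : ℝ) :
    UniformContinuousOn (fun x => A fun _ => x) (closedBall 0 r) := by
  have : Fintype ι := Fintype.ofFinite ι
  set n := Fintype.card ι
  have hlip (x) (hx : x ∈ closedBall (0 : E) r) (y) (hy : y ∈ closedBall (0 : E) r) :
      dist (A fun _ => x) (A fun _ => y) ≤ ‖A‖ * n * r ^ (n - 1) * dist x y := by
    rw [mem_closedBall_zero_iff] at hx hy
    have hsub : ‖(fun _ : ι => x) - fun _ : ι => y‖ ≤ ‖x - y‖ := pi_norm_const_le (x - y)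
    have hr : 0 ≤ r := (norm_nonneg x).trans hx
    rw [dist_eq_norm, dist_eq_norm]
    refine (A.norm_image_sub_le _ _).trans ?_
    gcongr
    exact max_le ((pi_norm_const_le x).trans hx) ((pi_norm_const_le y).trans hy)
  refine LipschitzOnWith.uniformContinuousOn (K := (‖A‖ * n * r ^ (n - 1)).toNNReal) <|
    .of_dist_le_mul fun x hx y hy => (hlip x hx y hy).trans ?_
  gcongr
  exact Real.le_coe_toNNReal _

theorem image_multilinearMap_diag_closedBall_subset [Fintype ι]
    (A : ContinuousMultilinearMap ℝ (fun _ : ι => E) Y) {R : ℝ} (hR : 0 < R) :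
    (fun x => A fun _ => x) '' closedBall 0 R ⊆
      (R ^ Fintype.card ι • ContinuousLinearMap.id ℝ Y) ''
        ((fun x => A fun _ => x) '' closedBall 0 1) := by
  rintro _ ⟨x, hx, rfl⟩
  rw [mem_closedBall_zero_iff] at hx
  refine ⟨_, ⟨R⁻¹ • x, ?_, rfl⟩, ?_⟩
  · rwa [mem_closedBall_zero_iff, norm_smul, norm_inv, Real.norm_of_nonneg hR.le,
      inv_mul_le_one₀ hR]
  · have hsmul : (A fun _ => R⁻¹ • x) = R⁻¹ ^ Fintype.card ι • A fun _ => x := by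
      simpa using A.map_smul_univ (fun _ => R⁻¹) (fun _ => x)
    simp [hsmul, smul_smul, hR.ne']

theorem isWeaklyCompactPoly_multilinearMap_diag [Fintype ι]
    (A : ContinuousMultilinearMap ℝ (fun _ : ι => E) Y)
    (hA : RelWeakCompact ((fun x => A fun _ => x) '' closedBall 0 1)) :
    IsWeaklyCompactPoly (Fintype.card ι + 1) fun x => A fun _ => x where
  degreeLT := degreeLT_multilinearMap_diag A.toMultilinearMap
  uniformContinuousOn_closedBall := uniformContinuousOn_multilinearMap_diag A
  relWeakCompact_image_closedBall r :=
    (hA.image _).mono <| (Set.image_mono (closedBall_subset_closedBall (le_max_left r 1))).trans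
      (image_multilinearMap_diag_closedBall_subset A (zero_lt_one.trans_le (le_max_right r 1)))

end Homogeneous

theorem compact_reflection_iff_wuc_sets_general {X Y : Type*}
    [NormedAddCommGroup X] [NormedSpace ℝ X] [NormedAddCommGroup Y] [NormedSpace ℝ Y]
    (k : ℕ) (A : ContinuousMultilinearMap ℝ (fun _ : Fin k => X) Y)
    (P : X → Y) (hP : P = fun x => A fun _ => x) :
    List.TFAE
      [ ∀ T : c0 →L[ℝ] X, CompactMap (fun z => P (T z)) → CompactMap ⇑T,
        ∀ s : Set X, IsWUCSet s → IsCompact (closure (P '' s)) → IsCompact (closure s),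
        ∀ s : Set X, IsWUCSet s → RelWeakCompact (P '' s) → IsCompact (closure s) ] := by
  tfae_have 1 → 3 := by
    rintro h _ ⟨T, rfl⟩ hw
    subst hP
    rw [Set.image_image] at hw
    exact h T ((isWeaklyCompactPoly_multilinearMap_diag
      (A.compContinuousLinearMap fun _ => T) hw).isCompact_closure_image_closedBall 1)
  tfae_have 3 → 2 := fun h s hs hc => h s hs (relWeakCompact_of_isCompact_closure hc)
  tfae_have 2 → 1 := fun h T hT => h _ ⟨T, rfl⟩ (by rwa [Set.image_image])
  tfae_finish

/-- Characterization of condition (F) in terms of WUC-sets. -/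
theorem compact_reflection_iff_wuc_sets {X Y : Type*}
    [NormedAddCommGroup X] [NormedSpace ℝ X] [CompleteSpace X]
    [NormedAddCommGroup Y] [NormedSpace ℝ Y] [CompleteSpace Y]
    (k : ℕ) (hk : 1 ≤ k) (A : ContinuousMultilinearMap ℝ (fun _ : Fin k => X) Y)
    (P : X → Y) (hP : P = fun x => A fun _ => x) :
    List.TFAE
      [ ∀ T : c0 →L[ℝ] X, CompactMap (fun z => P (T z)) → CompactMap ⇑T,
        ∀ s : Set X, IsWUCSet s → IsCompact (closure (P '' s)) → IsCompact (closure s),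
        ∀ s : Set X, IsWUCSet s → RelWeakCompact (P '' s) → IsCompact (closure s) ] :=
  compact_reflection_iff_wuc_sets_general k A P hP
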